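/- A Banach space X is Grothendieck if and only if its dual X* is weakly sequentially complete and X has no quotient isomorphic to c₀. -/

import Mathlib

open Filter Topology ZeroAtInfty

/-- A sequence in the dual of `X` converges in the weak* topology. -/
def WeakStarConv (X : Type*) [SeminormedAddCommGroup X] [NormedSpace ℝ X]
    (f : ℕ → X →L[ℝ] ℝ) (g : X →L[ℝ] ℝ) : Prop :=
  ∀ x : X, Tendsto (fun n => f n x) atTop (𝓝 (g x))

/-- A sequence in a normed space `Z` converges in the weak topology. -/
def WeakConv (Z : Type*) [SeminormedAddCommGroup Z] [NormedSpace ℝ Z]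
    (f : ℕ → Z) (g : Z) : Prop :=
  ∀ φ : Z →L[ℝ] ℝ, Tendsto (fun n => φ (f n)) atTop (𝓝 (φ g))

/-- A Banach space is Grothendieck if weak*-convergent sequences in its dual converge weakly. -/
def IsGrothendieck (X : Type*) [SeminormedAddCommGroup X] [NormedSpace ℝ X] : Prop :=
  ∀ (f : ℕ → X →L[ℝ] ℝ) (g : X →L[ℝ] ℝ),
    WeakStarConv X f g → WeakConv (X →L[ℝ] ℝ) f g

/-- The weak topology of a normed space. -/
def weakTopology (Y : Type*) [SeminormedAddCommGroup Y] [NormedSpace ℝ Y] :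
    TopologicalSpace Y :=
  TopologicalSpace.induced (fun (y : Y) => fun f : Y →L[ℝ] ℝ => f y) Pi.topologicalSpace

/-- An operator is weakly compact if the image of the closed unit ball is
relatively compact in the weak topology. -/
def IsWeaklyCompactOp {X Y : Type*} [SeminormedAddCommGroup X] [NormedSpace ℝ X]
    [SeminormedAddCommGroup Y] [NormedSpace ℝ Y] (T : X →L[ℝ] Y) : Prop :=
  @IsCompact Y (weakTopology Y) (@closure Y (weakTopology Y) (⇑T '' Metric.closedBall 0 1))

/-- A sequence in `Z` is weakly Cauchy if its image under every functional converges. -/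
def WeaklyCauchy (Z : Type*) [SeminormedAddCommGroup Z] [NormedSpace ℝ Z]
    (f : ℕ → Z) : Prop :=
  ∀ φ : Z →L[ℝ] ℝ, ∃ l : ℝ, Tendsto (fun n => φ (f n)) atTop (𝓝 l)

/-- `X` has a quotient isomorphic to `c₀`. -/
def HasQuotientC0 (X : Type*) [SeminormedAddCommGroup X] [NormedSpace ℝ X] : Prop :=
  ∃ M : Submodule ℝ X, IsClosed (M : Set X) ∧ Nonempty ((X ⧸ M) ≃L[ℝ] C₀(ℕ, ℝ))

/-- A normed space is weakly sequentially complete if every weakly Cauchy sequence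
converges weakly. -/
def WeaklySeqComplete (Z : Type*) [SeminormedAddCommGroup Z] [NormedSpace ℝ Z] : Prop :=
  ∀ f : ℕ → Z, WeaklyCauchy Z f → ∃ g : Z, WeakConv Z f g

/-! The coordinate functionals of `c₀` are weak* null, while the functional summing the coefficients
of an element of `c₀* = ℓ¹` is `1` on each of them; so `c₀` is not Grothendieck, and neither is any
space which maps onto it. A weakly Cauchy sequence in `X*` is weak* convergent by Banach–Steinhaus,
hence weakly convergent if `X` is Grothendieck.

Conversely, let `f` be weak* null in `X*`. By Rosenthal's `ℓ¹` theorem every subsequence of `f` has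
a further subsequence which is either weakly Cauchy, hence weakly null if `X*` is weakly
sequentially complete, or bounded below by the `ℓ¹` norm, in which case `x ↦ (f n x)ₙ` maps `X` onto
`c₀`, its adjoint being bounded below.

Rosenthal's theorem is proved by looking at the points of the dual ball where the sequence
oscillates between two levels `p < q`. Either one can pass to a subsequence that oscillates nowhere,
for all rational `p < q` simultaneously, and it converges pointwise; or for some `p < q` oscillation
survives every passage to a subsequence, and the indices can be chosen one at a time such that it
still survives on every cell cut out so far. The level sets are then Boolean independent, which
forces the lower `ℓ¹` estimate. -/

section Rosenthal

variable {ι κ α β : Type*}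

/-- `G` is a *subsequence filter* of `F`. Countably generated filters stand in for the infinite
subsets of `ℕ` along which one passes to subsequences, so that a decreasing sequence of
subsequences has its infimum as a lower bound. -/
structure IsSubseqFilter (G F : Filter ι) : Prop where
  le : G ≤ F
  neBot : G.NeBot
  isCountablyGenerated : G.IsCountablyGenerated

lemma IsSubseqFilter.mono {F G H : Filter ι} (hHG : IsSubseqFilter H G) (hGF : G ≤ F) :
    IsSubseqFilter H F :=
  ⟨hHG.le.trans hGF, hHG.neBot, hHG.isCountablyGenerated⟩

lemma IsSubseqFilter.self {F G : Filter ι} (h : IsSubseqFilter G F) : IsSubseqFilter G G :=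
  ⟨le_rfl, h.neBot, h.isCountablyGenerated⟩

lemma isSubseqFilter_inf_principal {F : Filter ι} [F.IsCountablyGenerated] {s : Set ι}
    (hs : ∃ᶠ i in F, i ∈ s) : IsSubseqFilter (F ⊓ 𝓟 s) F :=
  ⟨inf_le_left, frequently_mem_iff_neBot.1 hs, inferInstance⟩

lemma isSubseqFilter_iInf_of_antitone {F : Filter ι} {D : ℕ → Filter ι} (hD : Antitone D)
    (hDF : ∀ n, IsSubseqFilter (D n) F) : IsSubseqFilter (⨅ n, D n) F where
  le := (iInf_le D 0).trans (hDF 0).le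
  neBot := iInf_neBot_of_directed' hD.directed_ge fun n => (hDF n).neBot
  isCountablyGenerated := have := fun n => (hDF n).isCountablyGenerated
    inferInstance

lemma exists_isSubseqFilter_forall [Countable κ] {P : κ → Filter ι → Prop}
    (hP : ∀ k, Antitone (P k)) {F : Filter ι} [F.NeBot] [F.IsCountablyGenerated]
    (h : ∀ k G, IsSubseqFilter G F → ∃ H, IsSubseqFilter H G ∧ P k H) :
    ∃ G, IsSubseqFilter G F ∧ ∀ k, P k G := by
  have := Encodable.ofCountable κ
  let dense (k : κ) : Order.Cofinal {G // IsSubseqFilter G F}ᵒᵈ :=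
    { carrier := {G | P k G.ofDual.1}
      isCofinal := fun G =>
        let ⟨H, hHG, hPH⟩ := h k G.ofDual.1 G.ofDual.2
        ⟨.toDual ⟨H, hHG.mono G.ofDual.2.le⟩, hPH, hHG.le⟩ }
  let D := Order.sequenceOfCofinals (.toDual ⟨F, le_rfl, ‹_›, ‹_›⟩) dense
  have hD : Antitone fun n => (D n).ofDual.1 := fun _ _ hmn =>
    Order.sequenceOfCofinals.monotone _ dense hmn
  exact ⟨⨅ n, (D n).ofDual.1, isSubseqFilter_iInf_of_antitone hD fun n => (D n).ofDual.2,
    fun k => hP k (iInf_le _ _) (Order.sequenceOfCofinals.encode_mem _ dense k)⟩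

/-- The point `x` lies in `C b i` for frequently many `i`, whatever the colour `b`. For two colours,
`x` oscillates between two sequences of sets. -/
def OscillatesAt (C : β → ι → Set α) (F : Filter ι) (x : α) : Prop :=
  ∀ b, ∃ᶠ i in F, x ∈ C b i

lemma OscillatesAt.mono {C : β → ι → Set α} {F G : Filter ι} {x : α}
    (hx : OscillatesAt C G x) (hGF : G ≤ F) : OscillatesAt C F x :=
  fun b => (hx b).filter_mono hGF

/-- No subsequence of the coloured sets `C` ceases to oscillate at every point of `T`. -/
def HereditarilyOscillating (C : β → ι → Set α) (T : Set α) (F : Filter ι) : Prop :=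
  ∀ G, IsSubseqFilter G F → ∃ x ∈ T, OscillatesAt C G x

namespace HereditarilyOscillating

variable {C : β → ι → Set α} {T : Set α} {F : Filter ι}

lemma mono (h : HereditarilyOscillating C T F) {G : Filter ι} (hGF : G ≤ F) :
    HereditarilyOscillating C T G :=
  fun _ hH => h _ (hH.mono hGF)

lemma eventually_exists_oscillatesAt [F.IsCountablyGenerated]
    (h : HereditarilyOscillating C T F) (b : β) :
    ∀ᶠ i in F, ∃ x ∈ T ∩ C b i, OscillatesAt C F x := by
  by_contra hfreq
  obtain ⟨x, hxT, hx⟩ := h _ (isSubseqFilter_inf_principal (not_eventually.1 hfreq))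
  have hmem : ∀ᶠ i in F ⊓ 𝓟 {i | ¬∃ x ∈ T ∩ C b i, OscillatesAt C F x},
      ¬∃ x ∈ T ∩ C b i, OscillatesAt C F x := mem_inf_of_right (mem_principal_self _)
  obtain ⟨i, hxi, hi⟩ := ((hx b).and_eventually hmem).exists
  exact hi ⟨x, ⟨hxT, hxi⟩, hx.mono inf_le_left⟩

lemma frequently_forall_inter [Countable ι] [Finite β] [F.NeBot] [F.IsCountablyGenerated]
    {𝒯 : Set (Set α)} (h𝒯 : 𝒯.Finite) (h : ∀ T ∈ 𝒯, HereditarilyOscillating C T F) :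
    ∃ᶠ i in F, ∃ G, IsSubseqFilter G F ∧
      ∀ T ∈ 𝒯, ∀ b, HereditarilyOscillating C (T ∩ C b i) G := by
  intro hbad
  set Bad : Set ι := {i | ¬∃ G, IsSubseqFilter G F ∧
    ∀ T ∈ 𝒯, ∀ b, HereditarilyOscillating C (T ∩ C b i) G}
  obtain ⟨G, hGF, hG⟩ : ∃ G, IsSubseqFilter G F ∧
      ∀ i : Bad, ∃ T ∈ 𝒯, ∃ b, ∀ x ∈ T ∩ C b i, ¬OscillatesAt C G x := by
    refine exists_isSubseqFilter_forall (fun i G H hGH => ?_) fun i G hGF => ?_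
    · rintro ⟨T, hT, b, hb⟩
      exact ⟨T, hT, b, fun x hx hxG => hb x hx (hxG.mono hGH)⟩
    · have hi := i.2
      simp only [Bad, Set.mem_ofPred_eq, HereditarilyOscillating] at hi
      push Not at hi
      obtain ⟨T, hT, b, H, hHG, hH⟩ := hi G hGF
      exact ⟨H, hHG, T, hT, b, hH⟩
  have := hGF.neBot
  have := hGF.isCountablyGenerated
  have hgood : ∀ᶠ i in G, ∀ T ∈ 𝒯, ∀ b, ∃ x ∈ T ∩ C b i, OscillatesAt C G x :=
    h𝒯.eventually_all.2 fun T hT => eventually_all.2 fun b =>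
      ((h T hT).mono hGF.le).eventually_exists_oscillatesAt b
  obtain ⟨i, hi, hiBad⟩ := (hgood.and (hGF.le hbad)).exists
  obtain ⟨T, hT, b, hb⟩ := hG ⟨i, hiBad⟩
  obtain ⟨x, hx, hxG⟩ := hi T hT b
  exact hb x hx hxG

end HereditarilyOscillating

/-- The points of `T` which lie in the set of colour `σ i` for each `i ∈ u`. -/
def colourCell (C : β → ι → Set α) (T : Set α) (u : Finset ι) (σ : ι → β) : Set α :=
  {x ∈ T | ∀ i ∈ u, x ∈ C (σ i) i}

/-- Boolean independence on `T`, for an arbitrary set of colours in place of a set and its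
complement. -/
def IndependentOn (C : β → ι → Set α) (T : Set α) : Prop :=
  ∀ u σ, (colourCell C T u σ).Nonempty

lemma colourCell_empty (C : β → ι → Set α) (T : Set α) (σ : ι → β) :
    colourCell C T ∅ σ = T := by
  simp [colourCell]

lemma colourCell_insert [DecidableEq ι] (C : β → ι → Set α) (T : Set α) (i : ι) (u : Finset ι)
    (σ : ι → β) : colourCell C T (insert i u) σ = colourCell C T u σ ∩ C (σ i) i := by
  ext x
  simp only [colourCell, Finset.forall_mem_insert, Set.mem_ofPred_eq, Set.mem_inter_iff]
  tauto

lemma finite_range_colourCell [Finite β] (C : β → ι → Set α) (T : Set α) (u : Finset ι) :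
    (Set.range (colourCell C T u)).Finite :=
  (Set.finite_range fun τ : u → β => {x ∈ T | ∀ i : u, x ∈ C (τ i) i}).subset <| by
    rintro _ ⟨σ, rfl⟩
    exact ⟨fun i => σ i, by simp [colourCell]⟩

lemma exists_strictMono_forall_image_range {P : Finset ℕ → Prop} (h₀ : P ∅)
    (h : ∀ u, P u → ∃ᶠ n in atTop, P (insert n u)) :
    ∃ θ : ℕ → ℕ, StrictMono θ ∧ ∀ N, P ((Finset.range N).image θ) := by
  have hstep : ∀ u, P u → ∃ n, P (insert n u) ∧ ∀ m ∈ u, m < n := fun u hu =>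
    ((h u hu).and_eventually <| (eventually_all_finset u).2 fun m _ => eventually_gt_atTop m).exists
  choose! next hnext hlt using hstep
  let U : ℕ → Finset ℕ := fun N => Nat.rec ∅ (fun _ u => insert (next u) u) N
  have hU : ∀ N, P (U N) := fun N => by
    induction N with
    | zero => exact h₀
    | succ N ih => exact hnext _ ih
  have himage : ∀ N, (Finset.range N).image (fun n => next (U n)) = U N := fun N => by
    induction N with
    | zero => rfl
    | succ N ih => rw [Finset.range_add_one, Finset.image_insert, ih]
  exact ⟨fun n => next (U n),
    strictMono_nat_of_lt_succ fun n => hlt _ (hU (n + 1)) _ (Finset.mem_insert_self _ _),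
    fun N => (himage N).symm ▸ hU N⟩

lemma HereditarilyOscillating.exists_independentOn [Finite β] {C : β → ℕ → Set α} {T : Set α}
    {F : Filter ℕ} (hF : IsSubseqFilter F atTop) (h : HereditarilyOscillating C T F) :
    ∃ θ : ℕ → ℕ, StrictMono θ ∧ IndependentOn (fun b n => C b (θ n)) T := by
  obtain ⟨θ, hθ, hcells⟩ := exists_strictMono_forall_image_range
    (P := fun u => ∃ G, IsSubseqFilter G atTop ∧
      ∀ σ, HereditarilyOscillating C (colourCell C T u σ) G)
    ⟨F, hF, fun σ => by rwa [colourCell_empty]⟩ <| by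
      rintro u ⟨G, hG, hu⟩
      have := hG.neBot
      have := hG.isCountablyGenerated
      have hfreq := frequently_forall_inter (finite_range_colourCell C T u)
        (Set.forall_mem_range.2 hu)
      refine (hfreq.filter_mono hG.le).mono ?_
      rintro i ⟨H, hHG, hH⟩
      exact ⟨H, hHG.mono hG.le, fun σ => colourCell_insert C T i u σ ▸ hH _ ⟨σ, rfl⟩ _⟩
  refine ⟨θ, hθ, fun u σ => ?_⟩
  obtain ⟨N, hN⟩ := u.exists_nat_subset_range
  obtain ⟨G, hG, hcell⟩ := hcells N
  obtain ⟨x, ⟨hxT, hx⟩, -⟩ := hcell (Function.extend θ σ fun _ => σ 0) G hG.self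
  refine ⟨x, hxT, fun i hi => ?_⟩
  simpa only [hθ.injective.extend_apply] using hx (θ i) (Finset.mem_image_of_mem θ (hN hi))

/-- The sets on which `g i` exceeds `q` (colour `true`) or falls below `p` (colour `false`). -/
def levelSets (g : ι → α → ℝ) (p q : ℝ) : Bool → ι → Set α
  | true, i => {x | q < g i x}
  | false, i => {x | g i x < p}

lemma exists_tendsto_of_forall_not_oscillatesAt {u : ι → α → ℝ} {F : Filter ι} {x : α}
    (hbdd : Bornology.IsBounded (Set.range fun i => u i x))
    (h : ∀ p q : ℚ, p < q → ¬OscillatesAt (levelSets u p q) F x) :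
    ∃ l, Tendsto (fun i => u i x) F (𝓝 l) := by
  refine tendsto_of_no_upcrossings Rat.denseRange_cast ?_
    hbdd.bddAbove.isBoundedUnder_of_range hbdd.bddBelow.isBoundedUnder_of_range
  rintro _ ⟨p, rfl⟩ _ ⟨q, rfl⟩ hpq ⟨hp, hq⟩
  exact h p q (by exact_mod_cast hpq) (Bool.forall_bool.2 ⟨hp, hq⟩)

lemma exists_strictMono_tendsto_or_independentOn {g : ℕ → α → ℝ} {T : Set α}
    (hg : ∀ x ∈ T, Bornology.IsBounded (Set.range fun n => g n x)) :
    ∃ θ : ℕ → ℕ, StrictMono θ ∧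
      ((∀ x ∈ T, ∃ l, Tendsto (fun n => g (θ n) x) atTop (𝓝 l)) ∨
        ∃ p q, p < q ∧ IndependentOn (levelSets (fun n => g (θ n)) p q) T) := by
  by_cases hosc : ∃ p q : ℝ, p < q ∧ ∃ F, IsSubseqFilter F atTop ∧
      HereditarilyOscillating (levelSets g p q) T F
  · obtain ⟨p, q, hpq, F, hF, h⟩ := hosc
    obtain ⟨θ, hθ, hind⟩ := h.exists_independentOn hF
    refine ⟨θ, hθ, .inr ⟨p, q, hpq, ?_⟩⟩
    convert hind using 3 with b n
    cases b <;> rfl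
  · simp only [HereditarilyOscillating] at hosc
    push Not at hosc
    obtain ⟨G, hG, hconv⟩ : ∃ G, IsSubseqFilter G atTop ∧ ∀ r : {r : ℚ × ℚ // r.1 < r.2},
        ∀ x ∈ T, ¬OscillatesAt (levelSets g r.1.1 r.1.2) G x :=
      exists_isSubseqFilter_forall
        (fun r G H hGH h x hx hxG => h x hx (hxG.mono hGH))
        fun r => hosc _ _ (by exact_mod_cast r.2)
    have := hG.neBot
    have := hG.isCountablyGenerated
    obtain ⟨k, hk⟩ := exists_seq_tendsto G
    obtain ⟨φ, hφ, hkφ⟩ := strictMono_subseq_of_tendsto_atTop (hk.mono_right hG.le)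
    refine ⟨k ∘ φ, hkφ, .inl fun x hx => ?_⟩
    obtain ⟨l, hl⟩ := exists_tendsto_of_forall_not_oscillatesAt (hg x hx)
      fun p q hpq => hconv ⟨(p, q), hpq⟩ x hx
    exact ⟨l, hl.comp (hk.comp hφ.tendsto_atTop)⟩

lemma IndependentOn.exists_mul_sum_abs_le_sub {g : ι → α → ℝ} {T : Set α} {p q : ℝ}
    (h : IndependentOn (levelSets g p q) T) (s : Finset ι) (a : ι → ℝ) :
    ∃ x ∈ T, ∃ y ∈ T,
      (q - p) * ∑ i ∈ s, |a i| ≤ ∑ i ∈ s, a i * g i x - ∑ i ∈ s, a i * g i y := by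
  obtain ⟨x, hxT, hx⟩ := h s fun i => decide (0 ≤ a i)
  obtain ⟨y, hyT, hy⟩ := h s fun i => decide (a i < 0)
  refine ⟨x, hxT, y, hyT, ?_⟩
  rw [← Finset.sum_sub_distrib, Finset.mul_sum]
  refine Finset.sum_le_sum fun i hi => ?_
  have hxi := hx i hi
  have hyi := hy i hi
  rcases le_or_gt 0 (a i) with hai | hai
  · simp only [hai, hai.not_gt, decide_true, decide_false, levelSets, Set.mem_ofPred_eq] at hxi hyi
    rw [abs_of_nonneg hai]
    nlinarith
  · simp only [hai, hai.not_ge, decide_true, decide_false, levelSets, Set.mem_ofPred_eq] at hxi hyi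
    rw [abs_of_neg hai]
    nlinarith

/-- The lower half of the equivalence of `f` with the unit vector basis of `ℓ¹`; the upper half is
the boundedness of `f`. -/
def HasLowerL1Bound {Z : Type*} [SeminormedAddCommGroup Z] [NormedSpace ℝ Z] (δ : ℝ)
    (f : ι → Z) : Prop :=
  ∀ (s : Finset ι) (a : ι → ℝ), δ * ∑ i ∈ s, |a i| ≤ ‖∑ i ∈ s, a i • f i‖

variable {Z : Type*} [SeminormedAddCommGroup Z] [NormedSpace ℝ Z]

lemma weaklyCauchy_of_forall_mem_closedBall {f : ℕ → Z}
    (h : ∀ φ ∈ Metric.closedBall (0 : Z →L[ℝ] ℝ) 1,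
      ∃ l, Tendsto (fun n => φ (f n)) atTop (𝓝 l)) :
    WeaklyCauchy Z f := by
  intro φ
  have hpos : 0 < ‖φ‖ + 1 := by positivity
  obtain ⟨l, hl⟩ := h ((‖φ‖ + 1)⁻¹ • φ) <| by
    rw [mem_closedBall_zero_iff, norm_smul, norm_inv, Real.norm_of_nonneg hpos.le,
      inv_mul_le_iff₀ hpos]
    linarith
  refine ⟨(‖φ‖ + 1) * l, (hl.const_mul (‖φ‖ + 1)).congr fun n => ?_⟩
  simp [mul_inv_cancel_left₀ hpos.ne']

lemma IndependentOn.hasLowerL1Bound {f : ι → Z} {p q : ℝ}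
    (h : IndependentOn (levelSets (fun i (φ : Z →L[ℝ] ℝ) => φ (f i)) p q)
      (Metric.closedBall 0 1)) : HasLowerL1Bound ((q - p) / 2) f := by
  intro s a
  obtain ⟨φ, hφ, ψ, hψ, hle⟩ := h.exists_mul_sum_abs_le_sub s a
  set z := ∑ i ∈ s, a i • f i with hz
  have hsum : ∀ χ : Z →L[ℝ] ℝ, ∑ i ∈ s, a i * χ (f i) = χ z := by simp [hz]
  rw [mem_closedBall_zero_iff] at hφ hψ
  have hφz : φ z ≤ ‖z‖ := (le_abs_self _).trans (by simpa using φ.le_of_opNorm_le hφ z)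
  have hψz : -ψ z ≤ ‖z‖ := (neg_le_abs _).trans (by simpa using ψ.le_of_opNorm_le hψ z)
  rw [hsum, hsum] at hle
  linarith

theorem rosenthal_l1 {f : ℕ → Z} (hf : Bornology.IsBounded (Set.range f)) :
    ∃ θ : ℕ → ℕ, StrictMono θ ∧
      (WeaklyCauchy Z (f ∘ θ) ∨ ∃ δ > 0, HasLowerL1Bound δ (f ∘ θ)) := by
  obtain ⟨θ, hθ, hconv | ⟨p, q, hpq, hind⟩⟩ := exists_strictMono_tendsto_or_independentOn
    (g := fun n (φ : Z →L[ℝ] ℝ) => φ (f n)) (T := Metric.closedBall 0 1) fun φ _ => by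
      simpa only [← Set.range_comp, Function.comp_def] using φ.lipschitz.isBounded_image hf
  · exact ⟨θ, hθ, .inl (weaklyCauchy_of_forall_mem_closedBall hconv)⟩
  · exact ⟨θ, hθ, .inr ⟨(q - p) / 2, half_pos (sub_pos.2 hpq), hind.hasLowerL1Bound⟩⟩

end Rosenthal

section Duality

lemma surjective_of_approx_preimage {𝕜 E F : Type*} [NormedField 𝕜] [SeminormedAddCommGroup E]
    [NormedSpace 𝕜 E] [CompleteSpace E] [NormedAddCommGroup F] [NormedSpace 𝕜 F] (T : E →L[𝕜] F)
    {C : ℝ} (hT : ∀ y, ∃ x, ‖y - T x‖ ≤ 1 / 2 * ‖y‖ ∧ ‖x‖ ≤ C * ‖y‖) :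
    Function.Surjective T := by
  intro y
  choose g hg hgC using hT
  set remainder : ℕ → F := fun n => (fun y => y - T (g y))^[n] y with hrem
  have hsucc : ∀ n, remainder (n + 1) = remainder n - T (g (remainder n)) := fun n => by
    simp only [hrem, Function.iterate_succ_apply']
  have hpow : ∀ n, ‖remainder n‖ ≤ ‖y‖ / 2 ^ n := fun n => by
    induction n with
    | zero => simp [hrem]
    | succ n ih =>
      calc ‖remainder (n + 1)‖ ≤ 1 / 2 * ‖remainder n‖ := by rw [hsucc]; exact hg _
        _ ≤ 1 / 2 * (‖y‖ / 2 ^ n) := by gcongr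
        _ = ‖y‖ / 2 ^ (n + 1) := by ring
  have hgeom : Summable fun n : ℕ => ‖y‖ / 2 ^ n := by
    simpa [div_eq_mul_inv] using summable_geometric_two.mul_left ‖y‖
  have hsum : Summable fun n => g (remainder n) :=
    .of_norm_bounded (hgeom.mul_left |C|) fun n => (hgC _).trans <| by
      gcongr
      exacts [le_abs_self C, hpow n]
  have hpartial : ∀ n, T (∑ i ∈ Finset.range n, g (remainder i)) = y - remainder n := fun n => by
    induction n with
    | zero => simp [hrem]
    | succ n ih =>
      rw [Finset.sum_range_succ, map_add, ih, hsucc, sub_sub_eq_add_sub, sub_add_eq_add_sub]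
  have hlim : Tendsto remainder atTop (𝓝 0) :=
    squeeze_zero_norm hpow hgeom.tendsto_atTop_zero
  refine ⟨∑' n, g (remainder n), tendsto_nhds_unique
    ((T.continuous.tendsto _).comp hsum.hasSum.tendsto_sum_nat) ?_⟩
  simpa [Function.comp_def, hpartial] using hlim.const_sub y

lemma closedBall_subset_closure_image_closedBall {E F : Type*} [NormedAddCommGroup E]
    [NormedSpace ℝ E] [SeminormedAddCommGroup F] [NormedSpace ℝ F] {T : E →L[ℝ] F} {δ r : ℝ}
    (hr : 0 < r) (hT : ∀ ψ : F →L[ℝ] ℝ, δ * ‖ψ‖ ≤ ‖ψ.comp T‖) :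
    Metric.closedBall 0 (δ * r) ⊆ closure (T '' Metric.closedBall 0 r) := by
  intro y hy
  by_contra hmem
  obtain ⟨ψ, u, hψu, huy⟩ := geometric_hahn_banach_closed_point
    ((convex_closedBall (0 : E) r).linear_image T.toLinearMap).closure isClosed_closure hmem
  have hball : ∀ x ∈ Metric.closedBall (0 : E) r, ψ (T x) ≤ u := fun x hx =>
    (hψu _ (subset_closure ⟨x, hx, rfl⟩)).le
  have hball_neg : ∀ x ∈ Metric.closedBall (0 : E) r, -ψ (T x) ≤ u := fun x hx => by
    simpa using hball (-x) (by simpa using hx)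
  have hnorm : ‖ψ.comp T‖ ≤ u / r :=
    (ψ.comp T).opNorm_bound_of_ball_bound hr u fun x hx => abs_le'.2 ⟨hball x hx, hball_neg x hx⟩
  have hψy : ψ y ≤ u := calc
    ψ y ≤ ‖ψ‖ * (δ * r) :=
      (le_abs_self _).trans (ψ.le_opNorm_of_le (mem_closedBall_zero_iff.1 hy))
    _ = δ * ‖ψ‖ * r := by ring
    _ ≤ u / r * r := by gcongr; exact (hT ψ).trans hnorm
    _ = u := div_mul_cancel₀ u hr.ne'
  exact hψy.not_gt huy

lemma surjective_of_le_norm_comp {E F : Type*} [NormedAddCommGroup E] [NormedSpace ℝ E]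
    [CompleteSpace E] [NormedAddCommGroup F] [NormedSpace ℝ F] {T : E →L[ℝ] F} {δ : ℝ}
    (hδ : 0 < δ) (hT : ∀ ψ : F →L[ℝ] ℝ, δ * ‖ψ‖ ≤ ‖ψ.comp T‖) : Function.Surjective T := by
  refine surjective_of_approx_preimage T (C := δ⁻¹) fun y => ?_
  rcases eq_or_ne y 0 with rfl | hy
  · exact ⟨0, by simp⟩
  have hy : 0 < ‖y‖ := norm_pos_iff.2 hy
  have hmem : y ∈ closure (T '' Metric.closedBall 0 (δ⁻¹ * ‖y‖)) :=
    closedBall_subset_closure_image_closedBall (mul_pos (inv_pos.2 hδ) hy) hT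
      (by simp [mul_inv_cancel_left₀ hδ.ne'])
  obtain ⟨_, ⟨x, hx, rfl⟩, hxy⟩ := Metric.mem_closure_iff.1 hmem _ (mul_pos one_half_pos hy)
  exact ⟨x, by rw [← dist_eq_norm]; exact hxy.le, by simpa using hx⟩

lemma exists_dual_factorization {E F : Type*} [SeminormedAddCommGroup E] [NormedSpace ℝ E]
    [SeminormedAddCommGroup F] [NormedSpace ℝ F] (Φ : E →L[ℝ] ℝ) (S : E →L[ℝ] F) {C : ℝ}
    (h : ∀ x, ‖Φ x‖ ≤ C * ‖S x‖) : ∃ Ψ : F →L[ℝ] ℝ, Ψ.comp S = Φ := by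
  obtain ⟨Ψ, hΨ⟩ := StrongDual.exists_extension _ (Φ.toLinearMap.compLeftInverse S.toLinearMap)
  refine ⟨Ψ, ContinuousLinearMap.ext fun x => ?_⟩
  exact (hΨ ⟨S x, x, rfl⟩).trans (LinearMap.compLeftInverse_apply_of_bdd _ _ ⟨C, h⟩ x _ rfl)

lemma IsGrothendieck.of_surjective {X Y : Type*} [NormedAddCommGroup X] [NormedSpace ℝ X]
    [CompleteSpace X] [NormedAddCommGroup Y] [NormedSpace ℝ Y] [CompleteSpace Y]
    (hX : IsGrothendieck X) (T : X →L[ℝ] Y) (hT : Function.Surjective T) :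
    IsGrothendieck Y := by
  intro f g hfg Φ
  obtain ⟨C, hC, hpre⟩ := T.exists_preimage_norm_le hT
  have hbelow : ∀ ψ : Y →L[ℝ] ℝ, ‖ψ‖ ≤ C * ‖ψ.comp T‖ := fun ψ =>
    ψ.opNorm_le_bound (by positivity) fun y => by
      obtain ⟨x, rfl, hx⟩ := hpre y
      calc ‖ψ (T x)‖ ≤ ‖ψ.comp T‖ * (C * ‖T x‖) := (ψ.comp T).le_opNorm_of_le hx
        _ = C * ‖ψ.comp T‖ * ‖T x‖ := by ring
  obtain ⟨Ψ, hΨ⟩ := exists_dual_factorization Φ (ContinuousLinearMap.precomp ℝ T)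
    (C := ‖Φ‖ * C) fun ψ => by
      rw [mul_assoc]
      exact Φ.le_opNorm_of_le (hbelow ψ)
  rw [← hΨ]
  exact hX (fun n => (f n).comp T) (g.comp T) (fun x => hfg (T x)) Ψ

end Duality

section C0Basis

variable {ι F : Type*} [NormedAddCommGroup F] [NormedSpace ℝ F]

/-- The family `e`, with coordinate functionals `coord`, behaves like the unit vector basis of
`c₀`, up to the inequalities which are needed to identify the dual with `ℓ¹`. -/
structure IsC0Basis (e : ι → F) (coord : ι → F →L[ℝ] ℝ) : Prop where
  norm_coord_le (i : ι) : ‖coord i‖ ≤ 1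
  norm_sum_smul_le (s : Finset ι) (a : ι → ℝ) (ha : ∀ i, |a i| ≤ 1) : ‖∑ i ∈ s, a i • e i‖ ≤ 1
  hasSum_coord_smul (z : F) : HasSum (fun i => coord i z • e i) z

namespace IsC0Basis

variable {e : ι → F} {coord : ι → F →L[ℝ] ℝ}

lemma sum_abs_apply_le (he : IsC0Basis e coord) (ψ : F →L[ℝ] ℝ) (s : Finset ι) :
    ∑ i ∈ s, |ψ (e i)| ≤ ‖ψ‖ := by
  set σ : ι → ℝ := fun i => SignType.sign (ψ (e i)) with hσ
  have hnorm : ‖∑ i ∈ s, σ i • e i‖ ≤ 1 := he.norm_sum_smul_le s σ fun i => by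
    rcases lt_trichotomy (ψ (e i)) 0 with h | h | h <;> simp [hσ, h]
  calc ∑ i ∈ s, |ψ (e i)| = ψ (∑ i ∈ s, σ i • e i) := by simp [hσ, sign_mul_self]
    _ ≤ ‖ψ‖ := (le_abs_self _).trans (ψ.unit_le_opNorm _ hnorm)

lemma summable_abs_apply (he : IsC0Basis e coord) (ψ : F →L[ℝ] ℝ) :
    Summable fun i => |ψ (e i)| :=
  summable_of_sum_le (fun _ => abs_nonneg _) (he.sum_abs_apply_le ψ)

lemma exists_forall_apply_eq_tsum (he : IsC0Basis e coord) :
    ∃ Φ : (F →L[ℝ] ℝ) →L[ℝ] ℝ, ∀ ψ, Φ ψ = ∑' i, ψ (e i) := by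
  have hsum : ∀ ψ : F →L[ℝ] ℝ, Summable fun i => ψ (e i) :=
    fun ψ => (he.summable_abs_apply ψ).of_abs
  let Φ : (F →L[ℝ] ℝ) →ₗ[ℝ] ℝ :=
    { toFun := fun ψ => ∑' i, ψ (e i)
      map_add' := fun ψ χ => by simp only [add_apply, (hsum ψ).tsum_add (hsum χ)]
      map_smul' := fun c ψ => by simp [tsum_mul_left] }
  have hΦ : ∀ ψ, ‖Φ ψ‖ ≤ 1 * ‖ψ‖ := fun ψ => calc
    ‖∑' i, ψ (e i)‖ ≤ ∑' i, |ψ (e i)| := norm_tsum_le_tsum_norm (he.summable_abs_apply ψ)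
    _ ≤ 1 * ‖ψ‖ := by
      rw [one_mul]
      exact (he.summable_abs_apply ψ).tsum_le_of_sum_le (he.sum_abs_apply_le ψ)
  exact ⟨Φ.mkContinuous 1 hΦ, fun _ => rfl⟩

lemma norm_smul_coord_le (he : IsC0Basis e coord) (a : ℝ) (i : ι) : ‖a • coord i‖ ≤ |a| := by
  rw [norm_smul, Real.norm_eq_abs]
  exact mul_le_of_le_one_right (abs_nonneg a) (he.norm_coord_le i)

lemma hasSum_apply_smul_coord (he : IsC0Basis e coord) (ψ : F →L[ℝ] ℝ) :
    HasSum (fun i => ψ (e i) • coord i) ψ := by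
  have hsum : Summable fun i => ψ (e i) • coord i :=
    .of_norm_bounded (he.summable_abs_apply ψ) fun i => he.norm_smul_coord_le _ i
  convert hsum.hasSum using 1
  ext z
  refine ((he.hasSum_coord_smul z).mapL ψ).unique ?_
  simpa [mul_comm] using hsum.hasSum.mapL (ContinuousLinearMap.apply ℝ ℝ z)

lemma surjective_of_hasLowerL1Bound {E : Type*} [NormedAddCommGroup E] [NormedSpace ℝ E]
    [CompleteSpace E] (he : IsC0Basis e coord) {T : E →L[ℝ] F} {δ : ℝ}
    (hδ : 0 < δ) (hT : HasLowerL1Bound δ fun i => (coord i).comp T) :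
    Function.Surjective T := by
  refine surjective_of_le_norm_comp hδ fun ψ => ?_
  have habs := (he.summable_abs_apply ψ).hasSum
  have hψ := he.hasSum_apply_smul_coord ψ
  calc δ * ‖ψ‖ ≤ δ * ∑' i, |ψ (e i)| := by
        gcongr
        exact hψ.norm_le_of_bounded habs fun i => he.norm_smul_coord_le _ i
    _ ≤ ‖ψ.comp T‖ := le_of_tendsto_of_tendsto' (habs.mul_left δ)
        (hψ.mapL (ContinuousLinearMap.precomp ℝ T)).norm fun s => by
          simpa [Finset.mul_sum] using hT s fun i => ψ (e i)

end IsC0Basis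

end C0Basis

section C0

variable {ι : Type*} [TopologicalSpace ι]

lemma c0_norm_apply_le (z : C₀(ι, ℝ)) (i : ι) : ‖z i‖ ≤ ‖z‖ :=
  z.toBCF.norm_coe_le_norm i

lemma c0_norm_le {z : C₀(ι, ℝ)} {C : ℝ} (hC : 0 ≤ C) (h : ∀ i, ‖z i‖ ≤ C) : ‖z‖ ≤ C :=
  (BoundedContinuousFunction.norm_le hC).2 h

/-- The `i`-th coordinate functional on `c₀`. -/
noncomputable def c0Coord (i : ι) : C₀(ι, ℝ) →L[ℝ] ℝ :=
  LinearMap.mkContinuous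
    { toFun := fun z => z i
      map_add' := fun _ _ => rfl
      map_smul' := fun _ _ => rfl } 1 fun z => by
    rw [one_mul]
    exact c0_norm_apply_le z i

@[simp]
lemma c0Coord_apply (i : ι) (z : C₀(ι, ℝ)) : c0Coord i z = z i := rfl

variable [DiscreteTopology ι]

lemma c0_tendsto_cofinite (z : C₀(ι, ℝ)) : Tendsto z cofinite (𝓝 0) :=
  cocompact_eq_cofinite ι ▸ z.zero_at_infty'

variable [DecidableEq ι]

/-- The `i`-th unit vector of `c₀`. -/
def c0Single (i : ι) : C₀(ι, ℝ) where
  toFun := Pi.single i 1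
  continuous_toFun := continuous_of_discreteTopology
  zero_at_infty' := by
    rw [cocompact_eq_cofinite]
    exact tendsto_const_nhds.congr' <| (Set.finite_singleton i).eventually_cofinite_notMem.mono
      fun j hj => (Pi.single_eq_of_ne (M := fun _ => ℝ) (mt Set.mem_singleton_iff.2 hj) 1).symm

lemma c0Single_apply (i j : ι) : c0Single i j = if j = i then 1 else 0 :=
  Pi.single_apply i 1 j

lemma sum_smul_c0Single_apply (s : Finset ι) (a : ι → ℝ) (j : ι) :
    (∑ i ∈ s, a i • c0Single i) j = if j ∈ s then a j else 0 := by
  rw [← c0Coord_apply, map_sum]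
  simp [c0Single_apply]

lemma hasSum_smul_c0Single (z : C₀(ι, ℝ)) : HasSum (fun i => z i • c0Single i) z := by
  refine Metric.tendsto_nhds.2 fun ε hε => ?_
  have hfin : {i | ¬‖z i‖ < ε / 2}.Finite :=
    (c0_tendsto_cofinite z).norm.eventually_lt_const (by simpa using half_pos hε)
  filter_upwards [eventually_ge_atTop hfin.toFinset] with s hs
  rw [dist_comm, dist_eq_norm]
  refine (c0_norm_le (half_pos hε).le fun j => ?_).trans_lt (half_lt_self hε)
  rw [ZeroAtInftyContinuousMap.sub_apply, sum_smul_c0Single_apply]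
  split_ifs with hj
  · simpa using (half_pos hε).le
  · rw [sub_zero]
    by_contra hlt
    exact hj (hs (hfin.mem_toFinset.2 fun h => hlt h.le))

lemma isC0Basis_c0Single : IsC0Basis (c0Single (ι := ι)) c0Coord where
  norm_coord_le _ := LinearMap.mkContinuous_norm_le _ zero_le_one _
  norm_sum_smul_le s a ha := c0_norm_le zero_le_one fun j => by
    rw [sum_smul_c0Single_apply]
    split_ifs
    · exact ha j
    · simp
  hasSum_coord_smul := hasSum_smul_c0Single

end C0

section Grothendieck

lemma not_isGrothendieck_c0 : ¬IsGrothendieck C₀(ℕ, ℝ) := by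
  intro h
  obtain ⟨Φ, hΦ⟩ := isC0Basis_c0Single (ι := ℕ) |>.exists_forall_apply_eq_tsum
  have hnull : WeakStarConv C₀(ℕ, ℝ) c0Coord 0 := fun z =>
    Nat.cofinite_eq_atTop ▸ c0_tendsto_cofinite z
  have hΦ1 : ∀ n, Φ (c0Coord n) = 1 := fun n => by simp [hΦ, c0Single_apply]
  have hlim : Tendsto (fun n => Φ (c0Coord n)) atTop (𝓝 (Φ 0)) := h _ _ hnull Φ
  simp only [hΦ1, map_zero] at hlim
  exact one_ne_zero (tendsto_nhds_unique tendsto_const_nhds hlim)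

lemma IsGrothendieck.not_hasQuotientC0 {X : Type*} [NormedAddCommGroup X] [NormedSpace ℝ X]
    [CompleteSpace X] (hX : IsGrothendieck X) : ¬HasQuotientC0 X := by
  rintro ⟨M, -, ⟨e⟩⟩
  exact not_isGrothendieck_c0 <| hX.of_surjective (e.toContinuousLinearMap.comp M.mkQL)
    (e.surjective.comp M.mkQ_surjective)

lemma IsGrothendieck.weaklySeqComplete_dual {X : Type*} [SeminormedAddCommGroup X]
    [NormedSpace ℝ X] [BarrelledSpace ℝ X] (hX : IsGrothendieck X) :
    WeaklySeqComplete (X →L[ℝ] ℝ) := by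
  intro f hf
  choose g hg using fun x => hf (ContinuousLinearMap.apply ℝ ℝ x)
  exact ⟨continuousLinearMapOfTendsto f (tendsto_pi_nhds.2 hg), hX _ _ hg⟩

lemma WeakStarConv.isBounded_range {X : Type*} [SeminormedAddCommGroup X] [NormedSpace ℝ X]
    [CompleteSpace X] {f : ℕ → X →L[ℝ] ℝ} {g : X →L[ℝ] ℝ} (hf : WeakStarConv X f g) :
    Bornology.IsBounded (Set.range f) := by
  obtain ⟨K, hK⟩ := banach_steinhaus fun x =>
    (Metric.isBounded_range_of_tendsto _ (hf x)).exists_norm_le.imp fun _ hC n => hC _ ⟨n, rfl⟩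
  exact isBounded_iff_forall_norm_le.2 ⟨K, Set.forall_mem_range.2 hK⟩

lemma WeakStarConv.exists_c0Coord_comp_eq {X : Type*} [SeminormedAddCommGroup X]
    [NormedSpace ℝ X] [CompleteSpace X] {f : ℕ → X →L[ℝ] ℝ} (hf : WeakStarConv X f 0) :
    ∃ T : X →L[ℝ] C₀(ℕ, ℝ), ∀ n, (c0Coord n).comp T = f n := by
  obtain ⟨K, hK⟩ := hf.isBounded_range.exists_norm_le
  let T : X →ₗ[ℝ] C₀(ℕ, ℝ) :=
    { toFun := fun x =>
        { toFun := fun n => f n x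
          continuous_toFun := continuous_of_discreteTopology
          zero_at_infty' := by
            rw [cocompact_eq_cofinite, Nat.cofinite_eq_atTop]
            exact hf x }
      map_add' := fun x y => by ext n; exact map_add (f n) x y
      map_smul' := fun c x => by ext n; exact map_smul (f n) c x }
  have hT : ∀ x, ‖T x‖ ≤ K * ‖x‖ := fun x =>
    c0_norm_le ((norm_nonneg _).trans ((f 0).le_of_opNorm_le (hK _ ⟨0, rfl⟩) x)) fun n =>
      (f n).le_of_opNorm_le (hK _ ⟨n, rfl⟩) x
  exact ⟨T.mkContinuous K hT, fun n => rfl⟩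

lemma hasQuotientC0_of_surjective {X : Type*} [NormedAddCommGroup X] [NormedSpace ℝ X]
    [CompleteSpace X] (T : X →L[ℝ] C₀(ℕ, ℝ)) (hT : Function.Surjective T) :
    HasQuotientC0 X := by
  let e : (X ⧸ T.ker) ≃ₗ[ℝ] C₀(ℕ, ℝ) := T.toLinearMap.quotKerEquivOfSurjective hT
  have he : Continuous e := (Submodule.isQuotientMap_mkQ _).continuous_iff.2 T.continuous
  have hsymm : e.symm ∘ T = T.ker.mkQ := funext fun _ => e.symm_apply_eq.2 rfl
  have he_symm : Continuous e.symm :=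
    (T.isQuotientMap hT).continuous_iff.2 (hsymm ▸ T.ker.mkQL.continuous)
  exact ⟨T.ker, T.isClosed_ker, ⟨⟨e, he, he_symm⟩⟩⟩

lemma WeaklySeqComplete.weakConv_dual {X : Type*} [SeminormedAddCommGroup X] [NormedSpace ℝ X]
    (hX : WeaklySeqComplete (X →L[ℝ] ℝ)) {f : ℕ → X →L[ℝ] ℝ} {g : X →L[ℝ] ℝ}
    (hf : WeaklyCauchy (X →L[ℝ] ℝ) f) (hfg : WeakStarConv X f g) :
    WeakConv (X →L[ℝ] ℝ) f g := by
  obtain ⟨h, hfh⟩ := hX f hf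
  have hhg : h = g := ContinuousLinearMap.ext fun x =>
    tendsto_nhds_unique (hfh (ContinuousLinearMap.apply ℝ ℝ x)) (hfg x)
  exact hhg ▸ hfh

lemma isGrothendieck_of_weakConv_zero {X : Type*} [SeminormedAddCommGroup X] [NormedSpace ℝ X]
    (h : ∀ f, WeakStarConv X f 0 → WeakConv (X →L[ℝ] ℝ) f 0) : IsGrothendieck X := by
  intro f g hfg φ
  have hsub := h (fun n => f n - g) (fun x => by simpa using (hfg x).sub_const (g x)) φ
  simpa using hsub.add_const (φ g)

lemma WeaklySeqComplete.isGrothendieck {X : Type*} [NormedAddCommGroup X] [NormedSpace ℝ X]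
    [CompleteSpace X] (hX : WeaklySeqComplete (X →L[ℝ] ℝ)) (hc0 : ¬HasQuotientC0 X) :
    IsGrothendieck X := by
  refine isGrothendieck_of_weakConv_zero fun f hf φ => tendsto_of_subseq_tendsto fun k hk => ?_
  have hfk : WeakStarConv X (f ∘ k) 0 := fun x => (hf x).comp hk
  obtain ⟨θ, hθ, hcauchy | ⟨δ, hδ, hl1⟩⟩ := rosenthal_l1 hfk.isBounded_range
  · exact ⟨θ, hX.weakConv_dual hcauchy (fun x => (hfk x).comp hθ.tendsto_atTop) φ⟩
  · obtain ⟨T, hT⟩ := WeakStarConv.exists_c0Coord_comp_eq (f := f ∘ k ∘ θ)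
      fun x => (hfk x).comp hθ.tendsto_atTop
    refine absurd (hasQuotientC0_of_surjective T ?_) hc0
    refine isC0Basis_c0Single.surjective_of_hasLowerL1Bound hδ ?_
    simp only [hT]
    exact hl1

end Grothendieck

/-- Räbiger: `X` is Grothendieck iff `X*` is weakly sequentially complete and `X` has
no quotient isomorphic to `c₀`. -/
theorem grothendieck_iff_dual_wsc_and_no_c0_quotient (X : Type*)
    [NormedAddCommGroup X] [NormedSpace ℝ X] [CompleteSpace X] :
    IsGrothendieck X ↔ WeaklySeqComplete (X →L[ℝ] ℝ) ∧ ¬ HasQuotientC0 X :=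
  ⟨fun h => ⟨h.weaklySeqComplete_dual, h.not_hasQuotientC0⟩, fun h => h.1.isGrothendieck h.2⟩
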